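/- The infinite series identity 15√2/16 = Σ_{k=0}^{∞} (1/4)^k · [(3/4)_k (3/2)_k (3/2)_k] / [(1)_k (13/8)_k (17/8)_k] · (k + 1) holds, where the sum is over natural numbers k and all quantities are real numbers. -/

import Mathlib

noncomputable def risingFactorial (a : ℝ) (k : ℕ) : ℝ := ∏ i ∈ Finset.range k, (a + i)

open Filter Topology

lemma rf_zero (a : ℝ) : risingFactorial a 0 = 1 := by simp [risingFactorial]

lemma rf_succ (a : ℝ) (k : ℕ) : risingFactorial a (k+1) = risingFactorial a k * (a + k) := by
  simp [risingFactorial, Finset.prod_range_succ]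

lemma rf_pos (a : ℝ) (ha : 0 < a) (k : ℕ) : 0 < risingFactorial a k := by
  unfold risingFactorial
  exact Finset.prod_pos fun i _ => by positivity

/-- The WZ function. -/
noncomputable def FF (n k : ℕ) : ℝ :=
  risingFactorial (3/4) n ^ 2 * risingFactorial (3/2) k ^ 2 /
    (risingFactorial 1 n * risingFactorial (9/4) (n + k) * risingFactorial (3/4) k)

lemma FF_pos (n k : ℕ) : 0 < FF n k := by
  have h1 := rf_pos (3/4) (by norm_num) n
  have h2 := rf_pos (3/4) (by norm_num) k
  have h3 := rf_pos (3/2) (by norm_num) k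
  have h4 := rf_pos 1 (by norm_num) n
  have h5 := rf_pos (9/4) (by norm_num) (n+k)
  unfold FF
  positivity

lemma FF_succ_left (n k : ℕ) :
    FF (n+1) k = FF n k * ((3/4 + n)^2 / ((1 + n) * (9/4 + n + k))) := by
  have h2 := rf_pos (3/4) (by norm_num) k
  have h4 := rf_pos 1 (by norm_num) n
  have h5 := rf_pos (9/4) (by norm_num) (n+k)
  unfold FF
  rw [show n + 1 + k = (n + k) + 1 by ring, rf_succ, rf_succ, rf_succ]
  push_cast
  field_simp
  try ring

lemma FF_succ_right (n k : ℕ) :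
    FF n (k+1) = FF n k * ((3/2 + k)^2 / ((3/4 + k) * (9/4 + n + k))) := by
  have h2 := rf_pos (3/4) (by norm_num) k
  have h4 := rf_pos 1 (by norm_num) n
  have h5 := rf_pos (9/4) (by norm_num) (n+k)
  unfold FF
  rw [show n + (k + 1) = (n + k) + 1 by ring, rf_succ, rf_succ, rf_succ]
  push_cast
  field_simp
  try ring

lemma FF_wz (n k : ℕ) :
    FF n (k+1) - FF n k = (n+1 : ℕ) * FF (n+1) k / (k + 3/4) - n * FF n k / (k + 3/4) := by
  rw [FF_succ_left, FF_succ_right]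
  push_cast
  field_simp
  ring

lemma rf_double (k : ℕ) :
    risingFactorial (9/4) (k + k) * (9/4 + 2 * k) =
      9/4 * (4 ^ k * (risingFactorial (13/8) k * risingFactorial (17/8) k)) := by
  induction k with
  | zero => simp [rf_zero]
  | succ k ih =>
    rw [show k + 1 + (k + 1) = (k + k) + 1 + 1 by ring, rf_succ, rf_succ, rf_succ, rf_succ]
    push_cast
    linear_combination (9/4 + 2 * (k:ℝ) + 1) * (9/4 + 2 * (k:ℝ) + 2) * ih

/-- The summand. -/
noncomputable def tt (k : ℕ) : ℝ :=
  (1/4 : ℝ) ^ k * (risingFactorial (3/4) k * risingFactorial (3/2) k * risingFactorial (3/2) k) /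
        (risingFactorial (1) k * risingFactorial (13/8) k * risingFactorial (17/8) k) * ((k:ℝ) + 1)

lemma tt_eq (k : ℕ) : 4/3 * tt k = FF k (k+1) + k * FF k k / (k + 3/4) := by
  have h1 := rf_pos (3/4) (by norm_num) k
  have h4 := rf_pos 1 (by norm_num) k
  have h6 := rf_pos (13/8) (by norm_num) k
  have h7 := rf_pos (17/8) (by norm_num) k
  have h5 : risingFactorial (9/4) (k + k) =
      9/4 * (4 ^ k * (risingFactorial (13/8) k * risingFactorial (17/8) k)) / (9/4 + 2 * k) := by
    rw [← rf_double]; field_simp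
  rw [FF_succ_right]
  unfold FF tt
  rw [h5, one_div_pow]
  field_simp
  ring

lemma sum_tt (K : ℕ) : 4/3 * ∑ k ∈ Finset.range K, tt k = ∑ n ∈ Finset.range K, FF n K := by
  induction K with
  | zero => simp
  | succ K ih =>
    have h : ∑ n ∈ Finset.range K, (FF n (K+1) - FF n K) = K * FF K K / (K + 3/4) := by
      rw [Finset.sum_congr rfl (fun n _ => FF_wz n K),
        Finset.sum_range_sub (fun n : ℕ => (n:ℝ) * FF n K / ((K:ℝ) + 3/4))]
      simp
    rw [Finset.sum_sub_distrib] at h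
    rw [Finset.sum_range_succ, Finset.sum_range_succ, mul_add, ih, tt_eq]
    linarith

lemma FF_half (n K : ℕ) (h : n ≤ K) : 2 * FF (n+1) K ≤ FF n K := by
  rw [FF_succ_left]
  have hp := FF_pos n K
  have hn : (n:ℝ) ≤ K := by exact_mod_cast h
  have h0 : (0:ℝ) ≤ n := by positivity
  have : (3/4 + (n:ℝ))^2 / ((1 + n) * (9/4 + n + K)) ≤ 1/2 := by
    rw [div_le_iff₀ (by positivity)]
    nlinarith
  nlinarith

lemma tail_le (m K : ℕ) (h : m ≤ K) :
    ∑ n ∈ Finset.range m, FF (n+1) K ≤ 2 * (FF 1 K - FF (m+1) K) := by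
  induction m with
  | zero => simp
  | succ m ih =>
    rw [Finset.sum_range_succ]
    have := FF_half (m+1) K h
    have := ih (by omega)
    linarith

lemma FF_one_le (K : ℕ) : FF 1 K ≤ FF 0 K * (1 / ((K:ℝ) + 1)) := by
  rw [FF_succ_left 0 K]
  have hp := FF_pos 0 K
  apply mul_le_mul_of_nonneg_left _ hp.le
  rw [div_le_div_iff₀ (by positivity) (by positivity)]
  have h0 : (0:ℝ) ≤ K := by positivity
  push_cast
  nlinarith

lemma rf_gamma (s : ℝ) (hs : 0 < s) (n : ℕ) (hn : 0 < n) :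
    risingFactorial s (n+1) = (n:ℝ) ^ s * (n.factorial : ℝ) / Real.GammaSeq s n := by
  have h := rf_pos s hs (n+1)
  have hn' : (0:ℝ) < n := by exact_mod_cast hn
  have h2 : (0:ℝ) < (n:ℝ) ^ s := Real.rpow_pos_of_pos hn' s
  have h3 : (0:ℝ) < n.factorial := by exact_mod_cast n.factorial_pos
  have : Real.GammaSeq s n = (n:ℝ) ^ s * (n.factorial : ℝ) / risingFactorial s (n+1) := rfl
  rw [this]
  field_simp

lemma FF_zero_gamma (n : ℕ) (hn : 0 < n) :
    FF 0 (n+1) = Real.GammaSeq (9/4) n * Real.GammaSeq (3/4) n / Real.GammaSeq (3/2) n ^ 2 := by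
  have hn' : (0:ℝ) < n := by exact_mod_cast hn
  have h3 : (0:ℝ) < n.factorial := by exact_mod_cast n.factorial_pos
  unfold FF
  rw [rf_zero, rf_zero, zero_add, rf_gamma _ (by norm_num) n hn, rf_gamma _ (by norm_num) n hn,
    rf_gamma _ (by norm_num) n hn]
  have e : ((n:ℝ) ^ (3/2:ℝ))^2 = (n:ℝ)^(9/4:ℝ) * (n:ℝ)^(3/4:ℝ) := by
    rw [pow_two, ← Real.rpow_add hn', ← Real.rpow_add hn']; norm_num
  have p1 : (0:ℝ) < (n:ℝ) ^ (9/4:ℝ) := Real.rpow_pos_of_pos hn' _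
  have p2 : (0:ℝ) < (n:ℝ) ^ (3/4:ℝ) := Real.rpow_pos_of_pos hn' _
  rw [div_pow, mul_pow, e]
  field_simp

lemma gamma_val : Real.Gamma (9/4) * Real.Gamma (3/4) / Real.Gamma (3/2) ^ 2 = 5/4 * √2 := by
  have h1 : Real.Gamma (9/4) = 5/4 * (1/4 * Real.Gamma (1/4)) := by
    rw [← Real.Gamma_add_one (by norm_num), show (1/4 + 1 : ℝ) = 5/4 by norm_num,
      ← Real.Gamma_add_one (by norm_num)]
    norm_num
  have h2 : Real.Gamma (3/2) = 1/2 * √Real.pi := by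
    rw [← Real.Gamma_one_half_eq, ← Real.Gamma_add_one (by norm_num)]
    norm_num
  have h3 : Real.Gamma (1/4) * Real.Gamma (3/4) = Real.pi * √2 := by
    have := Real.Gamma_mul_Gamma_one_sub (1/4)
    rw [show (1 - 1/4 : ℝ) = 3/4 by norm_num, show Real.pi * (1/4) = Real.pi/4 by ring,
      Real.sin_pi_div_four] at this
    rw [this]
    have : √2 * √2 = (2:ℝ) := Real.mul_self_sqrt (by norm_num)
    field_simp
    linarith
  have hpi := Real.pi_pos
  rw [h1, h2, mul_pow, Real.sq_sqrt hpi.le]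
  rw [show 5/4 * (1/4 * Real.Gamma (1/4)) * Real.Gamma (3/4)
    = 5/16 * (Real.Gamma (1/4) * Real.Gamma (3/4)) by ring, h3]
  field_simp
  ring

lemma FF_zero_tendsto : Tendsto (fun n : ℕ => FF 0 (n+1)) atTop (𝓝 (5/4 * √2)) := by
  rw [← gamma_val]
  have h := ((Real.GammaSeq_tendsto_Gamma (9/4)).mul (Real.GammaSeq_tendsto_Gamma (3/4))).div
    ((Real.GammaSeq_tendsto_Gamma (3/2)).pow 2)
    (pow_ne_zero 2 (Real.Gamma_pos_of_pos (by norm_num)).ne')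
  refine h.congr' ?_
  filter_upwards [eventually_gt_atTop 0] with n hn
  exact (FF_zero_gamma n hn).symm

lemma sum_FF_tendsto :
    Tendsto (fun m : ℕ => ∑ n ∈ Finset.range (m+1), FF n (m+1)) atTop (𝓝 (5/4 * √2)) := by
  have hup : Tendsto (fun m : ℕ => FF 0 (m+1) * (1 + 2 * (1 / (((m+1 : ℕ):ℝ) + 1)))) atTop
      (𝓝 (5/4 * √2 * (1 + 2 * 0))) := by
    refine FF_zero_tendsto.mul (tendsto_const_nhds.add (tendsto_const_nhds.mul ?_))
    exact (tendsto_add_atTop_iff_nat 1).2 (tendsto_one_div_add_atTop_nhds_zero_nat (𝕜 := ℝ))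
  rw [mul_zero, add_zero, mul_one] at hup
  refine tendsto_of_tendsto_of_tendsto_of_le_of_le FF_zero_tendsto hup ?_ ?_
  · intro m
    exact Finset.single_le_sum (f := fun n => FF n (m+1)) (fun n _ => (FF_pos n (m+1)).le)
      (Finset.mem_range.2 (Nat.succ_pos m))
  · intro m
    show ∑ n ∈ Finset.range (m+1), FF n (m+1) ≤ _
    rw [Finset.sum_range_succ']
    have h1 := tail_le m (m+1) (by omega)
    have h2 := FF_one_le (m+1)
    have h3 := FF_pos (m+1) (m+1)
    linarith

lemma tt_nonneg (k : ℕ) : 0 ≤ tt k := by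
  have h := tt_eq k
  have h1 := FF_pos k (k+1)
  have h2 := FF_pos k k
  have : 0 ≤ k * FF k k / ((k:ℝ) + 3/4) := by positivity
  linarith

lemma tt_hasSum : HasSum tt (15 * √2 / 16) := by
  rw [hasSum_iff_tendsto_nat_of_nonneg tt_nonneg, ← tendsto_add_atTop_iff_nat 1]
  have h := sum_FF_tendsto.const_mul (3/4)
  rw [show 3/4 * (5/4 * √2) = 15 * √2 / 16 by ring] at h
  refine h.congr fun m => ?_
  rw [← sum_tt]
  ring



theorem stmt_1 :
    15 * Real.sqrt 2 / 16 =
      ∑' k : ℕ, (1/4 : ℝ) ^ k * (risingFactorial (3/4) k * risingFactorial (3/2) k * risingFactorial (3/2) k) /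
        (risingFactorial (1) k * risingFactorial (13/8) k * risingFactorial (17/8) k) * ((k:ℝ) + 1) := by
  exact tt_hasSum.tsum_eq.symm
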